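/- For every reflexive binary relation R on ℕ, there exists a family of subsets Z_i of ℕ such that for all i, j: Z_i generically computes Z_j if and only if R(i,j). Hence every countable reflexive binary relation embeds into the relation of relative generic computation on subsets of ℕ. -/

import Mathlib

open Filter

/-- The counting function: number of elements of `A` below `n`, divided by `n`. -/
noncomputable def partialDensity (A : Set ℕ) (n : ℕ) : ℝ := ((A ∩ Set.Iio n).ncard : ℝ) / n

/-- `A ⊆ ℕ` has density `d` if the partial densities tend to `d`. -/
def HasDensity (A : Set ℕ) (d : ℝ) : Prop :=
  Tendsto (partialDensity A) atTop (nhds d)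

/-- `A ⊆ ℕ` has density 1. -/
def Density1 (A : Set ℕ) : Prop := HasDensity A 1

/-- Partial recursive functions relative to an oracle `O : ℕ →. ℕ`
(relativization of `Nat.Partrec`). -/
inductive RecIn (O : ℕ →. ℕ) : (ℕ →. ℕ) → Prop
  | zero : RecIn O (pure 0)
  | succ : RecIn O ↑(Nat.succ)
  | left : RecIn O ↑fun n : ℕ => n.unpair.1
  | right : RecIn O ↑fun n : ℕ => n.unpair.2
  | oracle : RecIn O O
  | pair {f g} : RecIn O f → RecIn O g → RecIn O fun n => Nat.pair <$> f n <*> g n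
  | comp {f g} : RecIn O f → RecIn O g → RecIn O fun n => g n >>= f
  | prec {f g} : RecIn O f → RecIn O g → RecIn O (Nat.unpaired fun a n =>
      n.rec (f a) fun y IH => do let i ← IH; g (Nat.pair a (Nat.pair y i)))
  | rfind {f} : RecIn O f → RecIn O fun a =>
      Nat.rfind fun n => (fun m => m = 0) <$> f (Nat.pair a n)

open Classical in
/-- The characteristic function of a set of naturals, as a (total) partial function. -/
noncomputable def chi (A : Set ℕ) : ℕ →. ℕ :=
  fun n => Part.some (if n ∈ A then 1 else 0)

/-- `A` Turing-computes `B`. -/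
def TuringComputes (A B : Set ℕ) : Prop := RecIn (chi A) (chi B)

/-- `A` generically computes `C`: some `{0,1}`-valued partial function, partial recursive
in `A`, has density-1 domain and is correct about membership in `C` wherever defined. -/
def GenericallyComputes (A C : Set ℕ) : Prop :=
  ∃ φ : ℕ →. ℕ, RecIn (chi A) φ ∧
    Density1 {n | (φ n).Dom} ∧
    (∀ n v, v ∈ φ n → v = 0 ∨ v = 1) ∧
    (∀ n, 1 ∈ φ n → n ∈ C) ∧ (∀ n, 0 ∈ φ n → n ∉ C)

/-- `C` is generically computable (no oracle). -/
def GenericallyComputable (C : Set ℕ) : Prop :=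
  ∃ φ : ℕ →. ℕ, Nat.Partrec φ ∧
    Density1 {n | (φ n).Dom} ∧
    (∀ n v, v ∈ φ n → v = 0 ∨ v = 1) ∧
    (∀ n, 1 ∈ φ n → n ∈ C) ∧ (∀ n, 0 ∈ φ n → n ∉ C)

/-- Programs for partial functions recursive in an oracle. -/
inductive OracleCode : Type
  | zero | succ | left | right | oracle
  | pair (c d : OracleCode)
  | comp (c d : OracleCode)
  | prec (c d : OracleCode)
  | rfind (c : OracleCode)

namespace OracleCode

/-- The partial function computed by a program from the oracle `O`. -/
def eval (O : ℕ →. ℕ) : OracleCode → (ℕ →. ℕ)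
  | zero => pure 0
  | succ => ↑(Nat.succ)
  | left => ↑fun n : ℕ => n.unpair.1
  | right => ↑fun n : ℕ => n.unpair.2
  | oracle => O
  | pair c d => fun n => Nat.pair <$> eval O c n <*> eval O d n
  | comp c d => fun n => eval O d n >>= eval O c
  | prec c d => Nat.unpaired fun a n =>
      n.rec (eval O c a) fun y IH => do let i ← IH; eval O d (Nat.pair a (Nat.pair y i))
  | rfind c => fun a => Nat.rfind fun n => (fun m => m = 0) <$> eval O c (Nat.pair a n)

/-- A Gödel numbering of the programs. -/
def toNat : OracleCode → ℕ
  | zero => Nat.pair 0 0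
  | succ => Nat.pair 0 1
  | left => Nat.pair 0 2
  | right => Nat.pair 0 3
  | oracle => Nat.pair 0 4
  | pair c d => Nat.pair 1 (Nat.pair c.toNat d.toNat)
  | comp c d => Nat.pair 2 (Nat.pair c.toNat d.toNat)
  | prec c d => Nat.pair 3 (Nat.pair c.toNat d.toNat)
  | rfind c => Nat.pair 4 c.toNat

theorem toNat_injective : Function.Injective toNat := by
  intro c
  induction c with
  | zero | succ | left | right | oracle => intro d h; cases d <;> simp_all [toNat]
  | pair a b iha ihb | comp a b iha ihb | prec a b iha ihb =>
    intro d h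
    cases d <;> simp [toNat] at h
    rw [iha h.1, ihb h.2]
  | rfind a iha =>
    intro d h
    cases d <;> simp [toNat] at h
    rw [iha h]

instance : Countable OracleCode := toNat_injective.countable

theorem exists_eval_eq {O f : ℕ →. ℕ} (hf : RecIn O f) : ∃ c : OracleCode, c.eval O = f := by
  induction hf with
  | zero => exact ⟨zero, rfl⟩
  | succ => exact ⟨succ, rfl⟩
  | left => exact ⟨left, rfl⟩
  | right => exact ⟨right, rfl⟩
  | oracle => exact ⟨oracle, rfl⟩
  | pair _ _ ihf ihg =>
    obtain ⟨c, rfl⟩ := ihf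
    obtain ⟨d, rfl⟩ := ihg
    exact ⟨pair c d, rfl⟩
  | comp _ _ ihf ihg =>
    obtain ⟨c, rfl⟩ := ihf
    obtain ⟨d, rfl⟩ := ihg
    exact ⟨comp c d, rfl⟩
  | prec _ _ ihf ihg =>
    obtain ⟨c, rfl⟩ := ihf
    obtain ⟨d, rfl⟩ := ihg
    exact ⟨prec c d, rfl⟩
  | rfind _ ihf =>
    obtain ⟨c, rfl⟩ := ihf
    exact ⟨rfind c, rfl⟩

/-- The use principle: convergence to a given value is an open condition on the oracle. -/
theorem isOpen_setOf_mem_eval {T : Type*} [TopologicalSpace T] {O : T → (ℕ →. ℕ)}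
    (hO : ∀ n v, IsOpen {x | v ∈ O x n}) (c : OracleCode) (n v : ℕ) :
    IsOpen {x | v ∈ c.eval (O x) n} := by
  induction c generalizing n v with
  | zero | succ | left | right => simp only [eval, isOpen_const]
  | oracle => exact hO n v
  | pair c d ihc ihd =>
    have : {x | v ∈ (pair c d).eval (O x) n} =
        ⋃ a, ⋃ b, {x | a ∈ c.eval (O x) n} ∩ {x | b ∈ d.eval (O x) n} ∩ {_x | Nat.pair a b = v} := by
      ext x
      simp [eval, Seq.seq]
      grind
    rw [this]
    exact isOpen_iUnion fun a => isOpen_iUnion fun b =>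
      ((ihc n a).inter (ihd n b)).inter isOpen_const
  | comp c d ihc ihd =>
    have : {x | v ∈ (comp c d).eval (O x) n} =
        ⋃ a, {x | a ∈ d.eval (O x) n} ∩ {x | v ∈ c.eval (O x) a} := by
      ext x
      simp only [Set.mem_iUnion]
      exact Part.mem_bind_iff.trans (by simp)
    rw [this]
    exact isOpen_iUnion fun a => (ihd n a).inter (ihc a v)
  | prec c d ihc ihd =>
    obtain ⟨⟨a, k⟩, rfl⟩ : ∃ p : ℕ × ℕ, Nat.pair p.1 p.2 = n := ⟨n.unpair, Nat.pair_unpair n⟩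
    induction k generalizing v with
    | zero => simpa [eval] using ihc a v
    | succ k ih =>
      have : {x | v ∈ (prec c d).eval (O x) (Nat.pair a (k + 1))} =
          ⋃ i, {x | i ∈ (prec c d).eval (O x) (Nat.pair a k)} ∩
            {x | v ∈ d.eval (O x) (Nat.pair a (Nat.pair k i))} := by
        ext x
        simp [eval]
      rw [this]
      exact isOpen_iUnion fun i => (ih i).inter (ihd _ v)
  | rfind c ihc =>
    have : {x | v ∈ (rfind c).eval (O x) n} =
        {x | 0 ∈ c.eval (O x) (Nat.pair n v)} ∩
          ⋂ m ∈ Set.Iio v, ⋃ w, {x | w ∈ c.eval (O x) (Nat.pair n m)} ∩ {_x | w ≠ 0} := by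
      ext x
      exact Nat.mem_rfind.trans (by simp)
    rw [this]
    exact (ihc _ 0).inter ((Set.finite_Iio v).isOpen_biInter fun m _ =>
      isOpen_iUnion fun w => (ihc _ w).inter isOpen_const)

end OracleCode

theorem Nat.Partrec.recIn {O f : ℕ →. ℕ} (hf : Nat.Partrec f) : RecIn O f := by
  induction hf with
  | zero => exact .zero
  | succ => exact .succ
  | left => exact .left
  | right => exact .right
  | pair _ _ ihf ihg => exact .pair ihf ihg
  | comp _ _ ihf ihg => exact .comp ihf ihg
  | prec _ _ ihf ihg => exact .prec ihf ihg
  | rfind _ ihf => exact .rfind ihf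

/-- The density-zero set of numbers reserved for coding: a copy of the perfect squares. -/
def codingSet : Set ℕ := {m | m.unpair.1 = 0}

theorem ncard_codingSet_inter_Iio_le (n : ℕ) :
    (codingSet ∩ Set.Iio n).ncard ≤ Nat.sqrt n + 1 := by
  have hsub : codingSet ∩ Set.Iio n ⊆ (fun k => k * k) '' Set.Iio (Nat.sqrt n + 1) := by
    rintro m ⟨hm, hn : m < n⟩
    have hm' : m.unpair.2 * m.unpair.2 = m := by
      conv_rhs => rw [← Nat.pair_unpair m, show m.unpair.1 = 0 from hm, Nat.pair]
      split_ifs with h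
      · rfl
      · simp [Nat.eq_zero_of_not_pos h]
    exact ⟨m.unpair.2, Nat.lt_succ_of_le (Nat.le_sqrt.2 (hm'.le.trans hn.le)), hm'⟩
  calc (codingSet ∩ Set.Iio n).ncard
      ≤ ((fun k => k * k) '' Set.Iio (Nat.sqrt n + 1)).ncard :=
        Set.ncard_le_ncard hsub ((Set.finite_Iio _).image _)
    _ ≤ (Set.Iio (Nat.sqrt n + 1)).ncard := Set.ncard_image_le (Set.finite_Iio _)
    _ = Nat.sqrt n + 1 := by simp [Set.ncard_eq_toFinset_card']

theorem tendsto_sqrt_add_div_atTop (C : ℕ) :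
    Tendsto (fun n : ℕ => ((Nat.sqrt n + C : ℕ) : ℝ) / n) atTop (nhds 0) := by
  have h1 : Tendsto (fun n : ℕ => (Real.sqrt n)⁻¹ + C * (n : ℝ)⁻¹) atTop (nhds 0) := by
    have ha : Tendsto (fun n : ℕ => (Real.sqrt n)⁻¹) atTop (nhds 0) :=
      tendsto_inv_atTop_zero.comp (Real.tendsto_sqrt_atTop.comp tendsto_natCast_atTop_atTop)
    have hb : Tendsto (fun n : ℕ => (C : ℝ) * (n : ℝ)⁻¹) atTop (nhds (C * 0)) :=
      tendsto_const_nhds.mul (tendsto_inv_atTop_zero.comp tendsto_natCast_atTop_atTop)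
    simpa using ha.add hb
  refine squeeze_zero (fun n => by positivity) (fun n => ?_) h1
  push_cast
  rw [add_div, div_eq_mul_inv (C : ℝ)]
  gcongr
  calc (Nat.sqrt n : ℝ) / n ≤ Real.sqrt n / n := by
        gcongr
        exact Real.nat_sqrt_le_real_sqrt
    _ = (Real.sqrt n)⁻¹ := Real.sqrt_div_self

theorem density1_compl_codingSet : Density1 codingSetᶜ := by
  have h : Tendsto (fun n : ℕ => 1 - ((Nat.sqrt n + 1 : ℕ) : ℝ) / n) atTop (nhds 1) := by
    simpa using tendsto_const_nhds.sub (tendsto_sqrt_add_div_atTop 1)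
  refine tendsto_of_tendsto_of_tendsto_of_le_of_le' h tendsto_const_nhds ?_ ?_
  · filter_upwards [eventually_gt_atTop 0] with n hn
    have hn' : (0 : ℝ) < n := by exact_mod_cast hn
    have hcard : n ≤ (codingSetᶜ ∩ Set.Iio n).ncard + (Nat.sqrt n + 1) := by
      calc n = (Set.Iio n).ncard := by simp [Set.ncard_eq_toFinset_card']
        _ = ((codingSetᶜ ∩ Set.Iio n) ∪ (codingSet ∩ Set.Iio n)).ncard := by
          rw [← Set.union_inter_distrib_right, Set.compl_union_self, Set.univ_inter]
        _ ≤ _ := (Set.ncard_union_le _ _).trans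
          (Nat.add_le_add_left (ncard_codingSet_inter_Iio_le n) _)
    rw [partialDensity, one_sub_div hn'.ne']
    gcongr
    rw [sub_le_iff_le_add]
    exact_mod_cast hcard
  · filter_upwards [] with n
    refine div_le_one_of_le₀ ?_ n.cast_nonneg
    have : (codingSetᶜ ∩ Set.Iio n).ncard ≤ (Set.Iio n).ncard :=
      Set.ncard_le_ncard Set.inter_subset_right (Set.finite_Iio n)
    simpa [Set.ncard_eq_toFinset_card'] using this

theorem Density1.infinite_diff_codingSet {D : Set ℕ} (hD : Density1 D) :
    (D \ codingSet).Infinite := by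
  intro hfin
  have hle : ∀ n, partialDensity D n ≤
      ((Nat.sqrt n + (1 + (D \ codingSet).ncard) : ℕ) : ℝ) / n := by
    intro n
    unfold partialDensity
    gcongr
    have hsub : D ∩ Set.Iio n ⊆ (codingSet ∩ Set.Iio n) ∪ (D \ codingSet) := by
      intro m hm
      by_cases h : m ∈ codingSet
      · exact Or.inl ⟨h, hm.2⟩
      · exact Or.inr ⟨hm.1, h⟩
    have hfin' : ((codingSet ∩ Set.Iio n) ∪ (D \ codingSet)).Finite :=
      ((Set.finite_Iio n).inter_of_right _).union hfin
    have h1 := Set.ncard_le_ncard hsub hfin'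
    have h2 := Set.ncard_union_le (codingSet ∩ Set.Iio n) (D \ codingSet)
    have h3 := ncard_codingSet_inter_Iio_le n
    omega
  have h0 : Tendsto (partialDensity D) atTop (nhds 0) :=
    squeeze_zero (fun n => by unfold partialDensity; positivity) hle
      (tendsto_sqrt_add_div_atTop _)
  exact one_ne_zero (tendsto_nhds_unique hD h0)

/-- The set agreeing with `X i` off the coding set, whose coding set part stores `X j` for
every `j` with `R i j`. -/
def asymmJoin (R : ℕ → ℕ → Prop) (X : ℕ → ℕ → Bool) (i : ℕ) : Set ℕ :=
  {m | (m ∉ codingSet ∧ X i m = true) ∨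
    (m ∈ codingSet ∧ R i m.unpair.2.unpair.2 ∧ X m.unpair.2.unpair.2 m.unpair.2.unpair.1 = true)}

section asymmJoin

variable {R : ℕ → ℕ → Prop} {X : ℕ → ℕ → Bool} {i j : ℕ}

theorem mem_asymmJoin_of_notMem {m : ℕ} (hm : m ∉ codingSet) :
    m ∈ asymmJoin R X i ↔ X i m = true := by
  simp [asymmJoin, hm]

theorem pair_mem_asymmJoin (h : R i j) {m : ℕ} :
    Nat.pair 0 (Nat.pair m j) ∈ asymmJoin R X i ↔ X j m = true := by
  simp [asymmJoin, codingSet, h]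

theorem isClopen_setOf_mem_asymmJoin (R : ℕ → ℕ → Prop) (i m : ℕ) :
    IsClopen {X : ℕ → ℕ → Bool | m ∈ asymmJoin R X i} := by
  have hX : ∀ k n, IsClopen {X : ℕ → ℕ → Bool | X k n = true} := fun k n =>
    (isClopen_discrete {true}).preimage (f := fun X : ℕ → ℕ → Bool => X k n) (by fun_prop)
  have hp : ∀ p : Prop, IsClopen {_X : ℕ → ℕ → Bool | p} := fun p =>
    ⟨isClosed_const, isOpen_const⟩
  exact ((hp _).inter (hX _ _)).union ((hp _).inter ((hp _).inter (hX _ _)))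

theorem isOpen_setOf_mem_chi_asymmJoin (R : ℕ → ℕ → Prop) (i n v : ℕ) :
    IsOpen {X : ℕ → ℕ → Bool | v ∈ chi (asymmJoin R X i) n} := by
  have h := isClopen_setOf_mem_asymmJoin R i n
  have : {X : ℕ → ℕ → Bool | v ∈ chi (asymmJoin R X i) n} =
      ({X | n ∈ asymmJoin R X i} ∩ {_X | v = 1}) ∪
        ({X | n ∈ asymmJoin R X i}ᶜ ∩ {_X | v = 0}) := by
    ext X
    by_cases hn : n ∈ asymmJoin R X i <;> simp [chi, hn]
  rw [this]
  exact (h.isOpen.inter isOpen_const).union (h.compl.isOpen.inter isOpen_const)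

theorem genericallyComputes_asymmJoin (h : R i j) :
    GenericallyComputes (asymmJoin R X i) (asymmJoin R X j) := by
  let g : ℕ →. ℕ := fun m =>
    cond (decide (m.unpair.1 = 0)) Part.none (Part.some (Nat.pair 0 (Nat.pair m j)))
  have hg : Nat.Partrec g := by
    refine Partrec.nat_iff.1 (Partrec.cond ?_ Partrec.none ?_)
    · exact (Primrec.eq.comp (Primrec.fst.comp Primrec.unpair) (Primrec.const 0)).decide.to_comp
    · exact (Primrec₂.natPair.comp (Primrec.const 0)
        (Primrec₂.natPair.comp Primrec.id (Primrec.const j))).to_comp.partrec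
  let φ : ℕ →. ℕ := fun m => (g m).bind (chi (asymmJoin R X i))
  have hnone : ∀ m ∈ codingSet, φ m = Part.none := fun m hm => by
    simp only [φ, g, show m.unpair.1 = 0 from hm, decide_true, cond_true]
    exact Part.bind_none _
  have hsome : ∀ m ∉ codingSet, φ m = Part.some (if X j m = true then 1 else 0) := fun m hm => by
    simp only [φ, g, show m.unpair.1 ≠ 0 from hm, decide_false, cond_false]
    exact (Part.bind_some _ _).trans (by simp [chi, pair_mem_asymmJoin h])
  refine ⟨φ, .comp .oracle hg.recIn, ?_, fun m => ?_, fun m => ?_, fun m => ?_⟩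
  · convert density1_compl_codingSet using 1
    ext m
    by_cases hm : m ∈ codingSet
    · simp [hm, hnone m hm]
    · simp [hm, hsome m hm]
  all_goals
    by_cases hm : m ∈ codingSet
    · simp [hnone m hm]
    · cases hx : X j m <;> simp [hsome m hm, hx, mem_asymmJoin_of_notMem hm]

/-- The families `X` for which the program `c`, run on `asymmJoin R X i`, gives a wrong answer
about `asymmJoin R X j` off the coding set. -/
def errorSet (R : ℕ → ℕ → Prop) (c : OracleCode) (i j : ℕ) : Set (ℕ → ℕ → Bool) :=
  {X | ∃ m, m ∉ codingSet ∧ (X j m = false ∧ 1 ∈ c.eval (chi (asymmJoin R X i)) m ∨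
    X j m = true ∧ 0 ∈ c.eval (chi (asymmJoin R X i)) m)}

theorem isOpen_errorSet (R : ℕ → ℕ → Prop) (c : OracleCode) (i j : ℕ) :
    IsOpen (errorSet R c i j) := by
  have hX : ∀ m b, IsOpen {X : ℕ → ℕ → Bool | X j m = b} := fun m b =>
    (isOpen_discrete {b}).preimage (f := fun X : ℕ → ℕ → Bool => X j m) (by fun_prop)
  have hc := c.isOpen_setOf_mem_eval (isOpen_setOf_mem_chi_asymmJoin R i)
  have : errorSet R c i j = ⋃ m, {_X | m ∉ codingSet} ∩
      (({X | X j m = false} ∩ {X | 1 ∈ c.eval (chi (asymmJoin R X i)) m}) ∪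
        ({X | X j m = true} ∩ {X | 0 ∈ c.eval (chi (asymmJoin R X i)) m})) := by
    ext X
    simp [errorSet]
  rw [this]
  exact isOpen_iUnion fun m => isOpen_const.inter
    (((hX m _).inter (hc m 1)).union ((hX m _).inter (hc m 0)))

theorem asymmJoin_update (hij : i ≠ j) (h : ¬ R i j) (x : ℕ → Bool) :
    asymmJoin R (Function.update X j x) i = asymmJoin R X i := by
  ext m
  by_cases hk : m.unpair.2.unpair.2 = j
  · simp [asymmJoin, hk, h, hij]
  · simp [asymmJoin, hk, hij]

theorem tendsto_update_not (X : ℕ → ℕ → Bool) (j : ℕ) :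
    Tendsto (fun m => Function.update X j (Function.update (X j) m (!X j m))) atTop (nhds X) := by
  refine tendsto_pi_nhds.2 fun k => tendsto_pi_nhds.2 fun n => ?_
  refine tendsto_const_nhds.congr' ?_
  filter_upwards [eventually_gt_atTop n] with m hm
  by_cases hk : k = j
  · subst hk
    simp [hm.ne]
  · simp [hk]

theorem not_genericallyComputes_of_forall_mem (hij : i ≠ j) (h : ¬ R i j)
    (hX : ∀ c, X ∈ errorSet R c i j ∪ interior (errorSet R c i j)ᶜ) :
    ¬ GenericallyComputes (asymmJoin R X i) (asymmJoin R X j) := by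
  rintro ⟨φ, hφ, hdom, hval, h1, h0⟩
  obtain ⟨c, rfl⟩ := OracleCode.exists_eval_eq hφ
  rcases hX c with ⟨m, hm, ⟨hXm, hc⟩ | ⟨hXm, hc⟩⟩ | hint
  · simpa [mem_asymmJoin_of_notMem hm, hXm] using h1 m hc
  · simpa [mem_asymmJoin_of_notMem hm, hXm] using h0 m hc
  · have hev := (tendsto_update_not X j).eventually (isOpen_interior.mem_nhds hint)
    obtain ⟨N, hN⟩ := eventually_atTop.1 hev
    obtain ⟨m, ⟨hmD, hm⟩, hNm⟩ := hdom.infinite_diff_codingSet.exists_gt N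
    refine interior_subset (hN m hNm.le) ⟨m, hm, ?_⟩
    obtain ⟨v, hv⟩ := Part.dom_iff_mem.1 hmD
    rw [asymmJoin_update hij h]
    rcases hval m v hv with rfl | rfl
    · have := h0 m hv
      rw [mem_asymmJoin_of_notMem hm] at this
      exact Or.inr ⟨by simpa using this, hv⟩
    · have := h1 m hv
      rw [mem_asymmJoin_of_notMem hm] at this
      exact Or.inl ⟨by simpa using this, hv⟩

end asymmJoin

theorem exists_forall_iff_genericallyComputes (R : ℕ → ℕ → Prop) (hR : ∀ i, R i i) :
    ∃ Z : ℕ → Set ℕ, ∀ i j, R i j ↔ GenericallyComputes (Z i) (Z j) := by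
  obtain ⟨X, hX⟩ := (dense_iInter_of_isOpen
    (f := fun p : OracleCode × ℕ × ℕ =>
      errorSet R p.1 p.2.1 p.2.2 ∪ interior (errorSet R p.1 p.2.1 p.2.2)ᶜ)
    (fun p => (isOpen_errorSet R _ _ _).union isOpen_interior)
    (fun p => by
      rw [interior_compl, dense_iff_closure_eq, closure_union, Set.eq_univ_iff_forall]
      intro x
      by_cases hx : x ∈ closure (errorSet R p.1 p.2.1 p.2.2)
      · exact Or.inl hx
      · exact Or.inr (subset_closure hx))).nonempty
  rw [Set.mem_iInter] at hX
  refine ⟨asymmJoin R X, fun i j => ⟨genericallyComputes_asymmJoin, fun hgc => ?_⟩⟩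
  by_contra h
  exact not_genericallyComputes_of_forall_mem (by rintro rfl; exact h (hR i)) h
    (fun c => hX (c, i, j)) hgc

/-- Injectivity comes for free: pairing every element with a witness that only it computes
makes distinct elements have distinct sets. -/
theorem exists_injective_forall_iff_genericallyComputes {α : Type*} [Countable α]
    (R : α → α → Prop) (hR : ∀ a, R a a) :
    ∃ Z : α → Set ℕ, Function.Injective Z ∧
      ∀ a b, R a b ↔ GenericallyComputes (Z a) (Z b) := by
  obtain ⟨f, hf⟩ := Countable.exists_injective_nat (α ⊕ α)
  let S : α ⊕ α → α ⊕ α → Prop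
    | .inl a, .inl b => R a b
    | .inl a, .inr b => a = b
    | .inr _, _ => False
  obtain ⟨Z, hZ⟩ := exists_forall_iff_genericallyComputes
    (fun p q => p = q ∨ ∃ x y, f x = p ∧ f y = q ∧ S x y) (fun _ => Or.inl rfl)
  have key : ∀ x y, GenericallyComputes (Z (f x)) (Z (f y)) ↔ x = y ∨ S x y := by
    intro x y
    rw [← hZ]
    simp [hf.eq_iff]
  refine ⟨fun a => Z (f (.inl a)), fun a b hab => ?_, fun a b => ?_⟩
  · have h := (key (.inl a) (.inr a)).2 (Or.inr rfl)
    rw [show Z (f (.inl a)) = Z (f (.inl b)) from hab, key] at h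
    simpa [S, eq_comm] using h
  · rw [key]
    simp only [Sum.inl.injEq, S]
    exact ⟨Or.inr, fun h => h.elim (fun e => e ▸ hR a) id⟩

/-- Every reflexive binary relation on ℕ is isomorphic to a family of subsets of ℕ under
relative generic computation; hence every reflexive binary relation on a countable type
embeds into the relation of relative generic computation. -/
theorem embed_reflexive_relation_into_generic_computation :
    (∀ R : ℕ → ℕ → Prop, (∀ i, R i i) →
      ∃ Z : ℕ → Set ℕ, Function.Injective Z ∧
        ∀ i j, R i j ↔ GenericallyComputes (Z i) (Z j)) ∧
    (∀ (α : Type) [Countable α] (R' : α → α → Prop), (∀ a, R' a a) →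
      ∃ Z : α → Set ℕ, Function.Injective Z ∧
        ∀ a b, R' a b ↔ GenericallyComputes (Z a) (Z b)) := by
  exact ⟨fun R hR => exists_injective_forall_iff_genericallyComputes R hR,
    fun _ _ R hR => exists_injective_forall_iff_genericallyComputes R hR⟩
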